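/- Let ρ = e^{2πi/3} ∈ ℍ, let n ≥ 0, let x_1, …, x_n ∈ (0,1) be pairwise distinct and solve the algebraic system E^n_{8,3,12}, i.e. 8/x_i + 3/(x_i − 1) + Σ_{j≠i} 12/(x_j − x_i) = 0 for all 1 ≤ i ≤ n, and let w_1, …, w_n ∈ ℍ satisfy J(w_i) = x_i. Define f(τ) = η(τ)^{20} / ( E4(τ)² ∏_{i=1}^n (J(τ) − x_i)² ). Then: (1) f is holomorphic and nonvanishing at every τ ∈ ℍ with E4(τ) ≠ 0 and J(τ) ∉ {x_1, …, x_n}; (2) f has double poles with zero residues at τ = ρ and at each w_i, i.e. the limit as τ → w (τ ≠ w) of (d/dτ)[(τ − w)² f(τ)] is 0 for w = ρ and for each w = w_i; (3) for every τ ∈ ℍ with E4(τ) ≠ 0 and J(τ) ∉ {x_1, …, x_n}, one has (d/dτ)(f'(τ)/f(τ)) − (1/2)(f'(τ)/f(τ))² = 2π² ((12n+5)/6)² E4(τ); equivalently, any primitive h of f satisfies {h, τ} = 2π² (12n+5)²/36 · E4(τ). -/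

import Mathlib

open Complex Filter Topology

noncomputable section

/-- The nome `q = e^{2πiτ}`. -/
def qq (τ : ℂ) : ℂ := Complex.exp (2 * Real.pi * Complex.I * τ)

/-- The Eisenstein series `E₄(τ) = 1 + 240 Σ_{n≥1} σ₃(n) qⁿ`. -/
def E4 (τ : ℂ) : ℂ := 1 + 240 * ∑' n : ℕ, (∑ d ∈ (n + 1).divisors, (d : ℂ) ^ 3) * qq τ ^ (n + 1)

/-- The Eisenstein series `E₆(τ) = 1 − 504 Σ_{n≥1} σ₅(n) qⁿ`. -/
def E6 (τ : ℂ) : ℂ := 1 - 504 * ∑' n : ℕ, (∑ d ∈ (n + 1).divisors, (d : ℂ) ^ 5) * qq τ ^ (n + 1)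

/-- The normalized elliptic modular function `J = E₄³ / (E₄³ − E₆²)`. -/
def J (τ : ℂ) : ℂ := E4 τ ^ 3 / (E4 τ ^ 3 - E6 τ ^ 2)

/-- The Dedekind eta function `η(τ) = e^{πiτ/12} ∏_{n≥1} (1 − qⁿ)`. -/
def dedekindEta (τ : ℂ) : ℂ := Complex.exp (Real.pi * Complex.I * τ / 12) * ∏' n : ℕ, (1 - qq τ ^ (n + 1))

/-- The elliptic point `ρ = e^{2πi/3}`. -/
def rho : ℂ := Complex.exp (2 * Real.pi * Complex.I / 3)

/-- `f = η²⁰ / (E₄²·∏ᵢ(J−xᵢ)²)` where the `xᵢ ∈ (0,1)` solve the system `E^n_{8,3,12}`. -/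
def f5 (n : ℕ) (x : Fin n → ℝ) (z : ℂ) : ℂ :=
  dedekindEta z ^ 20 / (E4 z ^ 2 * ∏ i, (J z - (x i : ℂ)) ^ 2)

/-!
By Ramanujan's identities the logarithmic derivative of `f` is `2πi (E₂ / 6 + (E₆ / E₄) R(J))` with
`R(t) = 2 / 3 + 2 t ∑ᵢ 1 / (t - xᵢ)`, and the same identities turn the statement that the Schwarz
derivative is a multiple of `E₄` into a Riccati equation for `R` in the variable `t = J`. This is
the Heine–Stieltjes equation for `∏ᵢ (t - xᵢ)`, which holds when the charges `xᵢ` repel each other,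
that is, for the system with the terms `12 / (xᵢ - xⱼ)`.

With `12 / (xⱼ - xᵢ)` instead the charges attract each other, and two or more of them cannot be in
equilibrium inside `(0, 1)`; for at most one charge the two systems coincide.

Near a double pole write `f = φ / (τ - w) ^ 2`. The Schwarz derivative of a primitive of `f` then
has polar part `2 (φ' / φ)(w) / (τ - w)`. Since it agrees with a holomorphic function, `φ'(w) = 0`,
which says that the residue vanishes.
-/

section RamanujanIdentities

open UpperHalfPlane
open EisensteinSeries ModularForm Derivative
open scoped Manifold MatrixGroups Real

lemma tendsto_atImInfty_of_hasSum_qExpansion {h : ℝ} (hh : 0 < h) {f : ℍ → ℂ} {c : ℕ → ℂ}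
    (hf : ∀ τ : ℍ, HasSum (fun m ↦ c m • Function.Periodic.qParam h τ ^ m) (f τ)) :
    Tendsto f atImInfty (𝓝 (c 0)) := by
  have hq (τ : ℍ) : Function.Periodic.qParam h τ ≠ 0 := Function.Periodic.qParam_ne_zero _
  have hbdd : IsBoundedAtImInfty fun τ : ℍ ↦ (f τ - c 0) / Function.Periodic.qParam h τ := by
    refine isBoundedAtImInfty_of_hasSum_qExpansion (c := fun m ↦ c (m + 1)) hh fun τ ↦ ?_
    have hsum := ((hasSum_nat_add_iff' 1).mpr (hf τ)).div_const (Function.Periodic.qParam h τ)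
    simpa [pow_succ, ← mul_assoc, hq τ] using hsum
  have hzero : Tendsto (fun τ : ℍ ↦ f τ - c 0) atImInfty (𝓝 0) := by
    have hmul := hbdd.mul_isLittleO
      ((Asymptotics.isLittleO_one_iff ℝ).mpr (qParam_tendsto_atImInfty hh))
    refine (Asymptotics.isLittleO_one_iff ℝ).mp (hmul.congr (fun τ ↦ ?_) fun τ ↦ ?_)
    · exact div_mul_cancel₀ _ (hq τ)
    · simp only [Pi.one_apply, mul_one]
  simpa using hzero.add_const (c 0)

lemma tendsto_E2_atImInfty : Tendsto EisensteinSeries.E2 atImInfty (𝓝 1) := by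
  simpa using tendsto_atImInfty_of_hasSum_qExpansion one_pos
    (c := fun m ↦ if m = 0 then 1 else -24 * ArithmeticFunction.sigma 1 m) fun τ ↦ by
      simpa only [Function.Periodic.qParam, ofReal_one, div_one] using hasSum_qExpansion_E2 (z := τ)

lemma tendsto_E_atImInfty {k : ℕ} (hk : 3 ≤ k) (hk2 : Even k) :
    Tendsto (ModularForm.E hk) atImInfty (𝓝 1) := by
  rw [← E_qExpansion_coeff_zero hk hk2]
  exact tendsto_atImInfty_of_hasSum_qExpansion one_pos fun τ ↦
    ModularForm.hasSum_qExpansion (ModularForm.E hk) one_pos one_mem_strictPeriods_SL τ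

lemma norm_deriv_comp_ofComplex_le {F : ℍ → ℂ} (hF : MDiff F) {A M : ℝ}
    (hM : ∀ z : ℍ, A ≤ z.im → ‖F z‖ ≤ M) {z : ℍ} (hz : 2 * A ≤ z.im) :
    ‖deriv (F ∘ ofComplex) z‖ ≤ M / (z.im / 2) := by
  have him (w : ℂ) (hw : w ∈ Metric.closedBall (z : ℂ) (z.im / 2)) : z.im / 2 ≤ w.im := by
    have h := (Complex.abs_im_le_norm (w - z)).trans (mem_closedBall_iff_norm.mp hw)
    rw [Complex.sub_im, coe_im] at h
    linarith [(abs_le.mp h).1]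
  have hpos (w : ℂ) (hw : w ∈ Metric.closedBall (z : ℂ) (z.im / 2)) : 0 < w.im :=
    (half_pos z.im_pos).trans_le (him w hw)
  refine Complex.norm_deriv_le_of_forall_mem_sphere_norm_le (half_pos z.im_pos) ?_ fun w hw ↦ ?_
  · exact ((UpperHalfPlane.mdifferentiable_iff.mp hF).mono fun w hw ↦
      hpos w (Metric.closure_ball_subset_closedBall hw)).diffContOnCl
  · have hw' := Metric.sphere_subset_closedBall hw
    rw [Function.comp_apply, ofComplex_apply_of_im_pos (hpos w hw')]
    exact hM _ (by change A ≤ w.im; linarith [him w hw'])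

lemma isZeroAtImInfty_normalizedDeriv {F : ℍ → ℂ} (hF : MDiff F) (hb : IsBoundedAtImInfty F) :
    IsZeroAtImInfty (normalizedDerivOfComplex F) := by
  obtain ⟨M, A, hM⟩ := isBoundedAtImInfty_iff.mp hb
  have him : Tendsto UpperHalfPlane.im atImInfty atTop := tendsto_comap
  have hlim : Tendsto (fun z : ℍ ↦ ‖(2 * π * Complex.I : ℂ)⁻¹‖ * (M / (z.im / 2)))
      atImInfty (𝓝 0) := by
    simpa using ((him.atTop_div_const two_pos).const_div_atTop M).const_mul
      ‖(2 * π * Complex.I : ℂ)⁻¹‖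
  refine squeeze_zero_norm' ?_ hlim
  filter_upwards [him.eventually_ge_atTop (2 * A)] with z hz
  rw [normalizedDerivOfComplex, norm_mul]
  exact mul_le_mul_of_nonneg_left (norm_deriv_comp_ofComplex_le hF hM hz) (norm_nonneg _)

lemma eq_zero_of_slash_invariant_of_isZeroAtImInfty {k : ℤ} (hk : k < 12) {F : ℍ → ℂ}
    (hF : MDiff F) (hslash : ∀ γ : SL(2, ℤ), F ∣[k] γ = F) (h0 : IsZeroAtImInfty F) : F = 0 := by
  let f : CuspForm 𝒮ℒ k :=
    { toFun := F
      slash_action_eq' := fun _ ⟨γ, hγ⟩ ↦ hγ ▸ hslash γ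
      holo' := hF
      zero_at_cusps' := fun hc ↦ by
        rw [Subgroup.IsArithmetic.isCusp_iff_isCusp_SL2Z] at hc
        rw [OnePoint.isZeroAt_iff_forall_SL2Z hc]
        intro γ _
        rwa [hslash] }
  exact congrArg DFunLike.coe
    (rank_zero_iff_forall_zero.mp (CuspForm.rank_eq_zero_of_weight_lt_twelve hk) f)

lemma slash_SL_eq {k : ℤ} (f : ModularForm 𝒮ℒ k) (γ : SL(2, ℤ)) : (⇑f) ∣[k] γ = ⇑f :=
  SlashInvariantFormClass.slash_action_eq f _ ⟨γ, rfl⟩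

-- The difference of the two sides is a level one cusp form of weight less than `12`.
lemma serreDerivative_eq_of_slash_invariant {k : ℂ} {m : ℤ} (hm : m < 12) {F G : ℍ → ℂ}
    (hF : MDiff F) (hG : MDiff G)
    (hFslash : ∀ γ : SL(2, ℤ), serreDerivative k F ∣[m] γ = serreDerivative k F)
    (hGslash : ∀ γ : SL(2, ℤ), G ∣[m] γ = G)
    (hF1 : Tendsto F atImInfty (𝓝 1)) (hG1 : Tendsto G atImInfty (𝓝 1)) (z : ℍ) :
    serreDerivative k F z = -(k / 12) * G z := by
  have hzero : serreDerivative k F + (k / 12) • G = 0 := by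
    refine eq_zero_of_slash_invariant_of_isZeroAtImInfty hm
      ((serreDerivative_mdifferentiable k hF).add (hG.const_smul _)) (fun γ ↦ ?_) ?_
    · rw [SlashAction.add_slash, SL_smul_slash, hFslash, hGslash]
    · have hD : Tendsto _ _ _ := isZeroAtImInfty_normalizedDeriv hF (hF1.isBigO_one ℝ)
      have hlim := (hD.sub ((tendsto_E2_atImInfty.const_mul (k * 12⁻¹)).mul hF1)).add
        (hG1.const_smul (k / 12))
      rwa [show 0 - k * 12⁻¹ * 1 * 1 + (k / 12) • (1 : ℂ) = 0 by rw [smul_eq_mul]; ring] at hlim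
  simpa [eq_neg_iff_add_eq_zero] using congrFun hzero z

lemma normalizedDeriv_E₄ (z : ℍ) :
    normalizedDerivOfComplex E₄ z = (EisensteinSeries.E2 z * E₄ z - E₆ z) / 3 := by
  have h := serreDerivative_eq_of_slash_invariant (m := 6) (by norm_num) E₄.holo' E₆.holo'
    (fun γ ↦ mod_cast serreDerivative_slash_invariant (k := 4) E₄.holo' (slash_SL_eq _ γ))
    (slash_SL_eq _) (tendsto_E_atImInfty (by norm_num) (by decide))
    (tendsto_E_atImInfty (by norm_num) (by decide)) z
  rw [serreDerivative_apply] at h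
  linear_combination h

lemma normalizedDeriv_E₆ (z : ℍ) :
    normalizedDerivOfComplex E₆ z = (EisensteinSeries.E2 z * E₆ z - E₄ z ^ 2) / 2 := by
  have hE₄ : Tendsto E₄ atImInfty (𝓝 1) := tendsto_E_atImInfty (by norm_num) (by decide)
  have hsq (γ : SL(2, ℤ)) : (⇑E₄ * ⇑E₄) ∣[(8 : ℤ)] γ = ⇑E₄ * ⇑E₄ := by
    rw [show (8 : ℤ) = 4 + 4 by norm_num, mul_slash_SL2, slash_SL_eq]
  have h := serreDerivative_eq_of_slash_invariant (m := 8) (by norm_num) E₆.holo'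
    (E₄.holo'.mul E₄.holo')
    (fun γ ↦ mod_cast serreDerivative_slash_invariant (k := 6) E₆.holo' (slash_SL_eq _ γ))
    hsq (tendsto_E_atImInfty (by norm_num) (by decide)) (by simpa using! hE₄.mul hE₄) z
  rw [serreDerivative_apply, Pi.mul_apply] at h
  linear_combination h

lemma E2_slash_apply (γ : SL(2, ℤ)) (z : ℍ) :
    (EisensteinSeries.E2 ∣[(2 : ℤ)] γ) z =
      EisensteinSeries.E2 z + 12 * (2 * π * Complex.I)⁻¹ * (γ 1 0 / denom γ z) := by
  have hπ : (π : ℂ) ≠ 0 := Complex.ofReal_ne_zero.mpr Real.pi_ne_zero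
  rw [E2_slash_action, Pi.sub_apply, Pi.smul_apply, D2, riemannZeta_two, smul_eq_mul]
  field_simp
  linear_combination -(12 * (γ 1 0 : ℂ)) * Complex.I_sq

lemma hasDerivAt_div_denom (γ : SL(2, ℤ)) (z : ℍ) :
    HasDerivAt (fun w : ℂ ↦ (γ 1 0 : ℂ) / denom γ w) (-(γ 1 0 / denom γ z) ^ 2) z := by
  have h := (hasDerivAt_denom_zpow γ (-1) z).const_mul (γ 1 0 : ℂ)
  convert! h using 1
  · ext w
    rw [zpow_neg_one, div_eq_mul_inv]
  · rw [show (-1 - 1 : ℤ) = -(2 : ℕ) by norm_num, zpow_neg, zpow_natCast]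
    simp
    ring

lemma normalizedDeriv_E2_slash (γ : SL(2, ℤ)) (z : ℍ) :
    normalizedDerivOfComplex (EisensteinSeries.E2 ∣[(2 : ℤ)] γ) z =
      normalizedDerivOfComplex EisensteinSeries.E2 z -
        12 * (2 * π * Complex.I)⁻¹ ^ 2 * (γ 1 0 / denom γ z) ^ 2 := by
  have hE2 := (UpperHalfPlane.mdifferentiableAt_iff.mp (E2_mdifferentiable z)).hasDerivAt
  have h := hE2.add ((hasDerivAt_div_denom γ z).const_mul (12 * (2 * π * Complex.I)⁻¹))
  have hcongr : (EisensteinSeries.E2 ∣[(2 : ℤ)] γ) ∘ ofComplex =ᶠ[𝓝 ↑z]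
      EisensteinSeries.E2 ∘ ofComplex +
        fun w ↦ 12 * (2 * π * Complex.I)⁻¹ * ((γ 1 0 : ℂ) / denom γ w) := by
    filter_upwards [isOpen_upperHalfPlaneSet.mem_nhds z.im_pos] with w hw
    simp only [Function.comp_apply, Pi.add_apply, E2_slash_apply, ofComplex_apply_of_im_pos hw]
  rw [normalizedDerivOfComplex, normalizedDerivOfComplex, (h.congr_of_eventuallyEq hcongr).deriv]
  ring

/- `E₂` has weight `2`, yet its Serre derivative of index `1`, not `2`, is modular: `D E₂` and
`E₂ ^ 2 / 12` have the same anomaly under `γ`. -/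
lemma serreDerivative_one_E2_slash (γ : SL(2, ℤ)) :
    serreDerivative 1 EisensteinSeries.E2 ∣[(4 : ℤ)] γ =
      serreDerivative 1 EisensteinSeries.E2 := by
  have hser : serreDerivative 1 EisensteinSeries.E2 =
      normalizedDerivOfComplex EisensteinSeries.E2 +
        (-(1 / 12) : ℂ) • (EisensteinSeries.E2 * EisensteinSeries.E2) := by
    ext z
    simp only [serreDerivative_apply, Pi.add_apply, Pi.smul_apply, Pi.mul_apply, smul_eq_mul]
    ring
  have hsq : (EisensteinSeries.E2 * EisensteinSeries.E2) ∣[(4 : ℤ)] γ =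
      EisensteinSeries.E2 ∣[(2 : ℤ)] γ * EisensteinSeries.E2 ∣[(2 : ℤ)] γ := by
    rw [show (4 : ℤ) = 2 + 2 by norm_num, mul_slash_SL2]
  rw [hser, SlashAction.add_slash, SL_smul_slash, hsq]
  ext z
  have hD := congrFun (normalizedDerivOfComplex_SL_slash (k := 2) (γ := γ) E2_mdifferentiable) z
  rw [Pi.sub_apply, normalizedDeriv_E2_slash, show (2 + 2 : ℤ) = 4 by norm_num] at hD
  simp only [Pi.add_apply, Pi.smul_apply, Pi.mul_apply, smul_eq_mul, E2_slash_apply] at hD ⊢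
  push_cast at hD
  linear_combination -hD

lemma normalizedDeriv_E2 (z : ℍ) :
    normalizedDerivOfComplex EisensteinSeries.E2 z =
      (EisensteinSeries.E2 z ^ 2 - E₄ z) / 12 := by
  have h := serreDerivative_eq_of_slash_invariant (m := 4) (by norm_num) E2_mdifferentiable
    E₄.holo' serreDerivative_one_E2_slash (slash_SL_eq _) tendsto_E2_atImInfty
    (tendsto_E_atImInfty (by norm_num) (by decide)) z
  rw [serreDerivative_apply] at h
  linear_combination h

end RamanujanIdentities

section DerivativesOnUpperHalfPlane

open UpperHalfPlane hiding I J
open EisensteinSeries ModularForm Derivative ArithmeticFunction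
open scoped Manifold Real

/-- The quasimodular Eisenstein series `E₂` as a function on `ℂ`, with a junk value off the upper
half-plane. -/
def E2C (τ : ℂ) : ℂ := EisensteinSeries.E2 (ofComplex τ)

lemma E4_coe (z : ℍ) : E4 z = E₄ z := by
  rw [q_expansion_bernoulli (by norm_num) ⟨2, rfl⟩, show bernoulli 4 = -1 / 30 by decide +kernel,
    E4, ← tsum_pnat_eq_tsum_succ (f := fun n ↦ (∑ d ∈ n.divisors, (d : ℂ) ^ 3) * qq z ^ n)]
  norm_num [sigma_apply, qq]

lemma E6_coe (z : ℍ) : E6 z = E₆ z := by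
  rw [q_expansion_bernoulli (by norm_num) ⟨3, rfl⟩, show bernoulli 6 = 1 / 42 by decide +kernel,
    E6, ← tsum_pnat_eq_tsum_succ (f := fun n ↦ (∑ d ∈ n.divisors, (d : ℂ) ^ 5) * qq z ^ n)]
  norm_num [sigma_apply, qq]

lemma dedekindEta_eq_eta : dedekindEta = ModularForm.eta := by
  ext z
  simp only [dedekindEta, ModularForm.eta, eta_q_eq_pow, qq, Function.Periodic.qParam]
  congr 2
  push_cast
  ring

lemma E4_cube_sub_E6_sq {z : ℂ} (hz : 0 < z.im) :
    E4 z ^ 3 - E6 z ^ 2 = 1728 * dedekindEta z ^ 24 := by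
  have h := discriminant_eq_E₄_cube_sub_E₆_sq ⟨z, hz⟩
  rw [← E4_coe, ← E6_coe, discriminant, ← dedekindEta_eq_eta] at h
  change dedekindEta z ^ 24 = (E4 z ^ 3 - E6 z ^ 2) / 1728 at h
  rw [h]
  ring

lemma dedekindEta_ne_zero {z : ℂ} (hz : 0 < z.im) : dedekindEta z ≠ 0 := by
  rw [dedekindEta_eq_eta]
  exact eta_ne_zero hz

lemma E4_cube_sub_E6_sq_ne_zero {z : ℂ} (hz : 0 < z.im) : E4 z ^ 3 - E6 z ^ 2 ≠ 0 := by
  rw [E4_cube_sub_E6_sq hz]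
  exact mul_ne_zero (by norm_num) (pow_ne_zero _ (dedekindEta_ne_zero hz))

lemma hasDerivAt_of_mdifferentiable {F : ℍ → ℂ} (hF : MDiff F) {g : ℂ → ℂ}
    (hg : ∀ z : ℍ, g z = F z) (z : ℍ) :
    HasDerivAt g (2 * π * Complex.I * normalizedDerivOfComplex F z) z := by
  rw [normalizedDerivOfComplex, mul_inv_cancel_left₀ Complex.two_pi_I_ne_zero]
  refine (UpperHalfPlane.mdifferentiableAt_iff.mp (hF z)).hasDerivAt.congr_of_eventuallyEq ?_
  filter_upwards [isOpen_upperHalfPlaneSet.mem_nhds z.im_pos] with w hw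
  rw [Function.comp_apply, ofComplex_apply_of_im_pos hw, ← hg]

lemma E2C_coe (z : ℍ) : E2C z = EisensteinSeries.E2 z := by rw [E2C, ofComplex_apply]

lemma hasDerivAt_E2C {z : ℂ} (hz : 0 < z.im) :
    HasDerivAt E2C (2 * π * Complex.I * ((E2C z ^ 2 - E4 z) / 12)) z := by
  have h := hasDerivAt_of_mdifferentiable E2_mdifferentiable E2C_coe ⟨z, hz⟩
  rwa [normalizedDeriv_E2, ← E2C_coe, ← E4_coe] at h

lemma hasDerivAt_E4 {z : ℂ} (hz : 0 < z.im) :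
    HasDerivAt E4 (2 * π * Complex.I * ((E2C z * E4 z - E6 z) / 3)) z := by
  have h := hasDerivAt_of_mdifferentiable (F := E₄) E₄.holo' E4_coe ⟨z, hz⟩
  rwa [normalizedDeriv_E₄, ← E2C_coe, ← E4_coe, ← E6_coe] at h

lemma hasDerivAt_E6 {z : ℂ} (hz : 0 < z.im) :
    HasDerivAt E6 (2 * π * Complex.I * ((E2C z * E6 z - E4 z ^ 2) / 2)) z := by
  have h := hasDerivAt_of_mdifferentiable (F := E₆) E₆.holo' E6_coe ⟨z, hz⟩
  rwa [normalizedDeriv_E₆, ← E2C_coe, ← E4_coe, ← E6_coe] at h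

lemma hasDerivAt_J {z : ℂ} (hz : 0 < z.im) :
    HasDerivAt J (2 * π * Complex.I * -(E4 z ^ 2 * E6 z / (E4 z ^ 3 - E6 z ^ 2))) z := by
  have h0 := E4_cube_sub_E6_sq_ne_zero hz
  have h4 := (hasDerivAt_E4 hz).fun_pow 3
  have h6 := (hasDerivAt_E6 hz).fun_pow 2
  convert! h4.fun_div (h4.fun_sub h6) h0 using 1
  field_simp
  ring

lemma J_eq_zero_iff {z : ℂ} (hz : 0 < z.im) : J z = 0 ↔ E4 z = 0 := by
  simp [J, E4_cube_sub_E6_sq_ne_zero hz]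

lemma J_sub_one {z : ℂ} (hz : 0 < z.im) : J z - 1 = E6 z ^ 2 / (E4 z ^ 3 - E6 z ^ 2) := by
  have h0 := E4_cube_sub_E6_sq_ne_zero hz
  rw [J]
  field_simp
  ring

lemma rho_im_pos : 0 < rho.im := by
  rw [rho, show (2 * π * Complex.I / 3 : ℂ) = ((2 * π / 3 : ℝ) : ℂ) * Complex.I by
    push_cast; ring, Complex.exp_ofReal_mul_I_im]
  apply Real.sin_pos_of_pos_of_lt_pi <;> linarith [Real.pi_pos]

lemma isPrimitiveRoot_rho : IsPrimitiveRoot rho 3 := by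
  simpa [rho] using Complex.isPrimitiveRoot_exp 3 (by norm_num)

lemma neg_inv_rho : -rho⁻¹ = rho + 1 := by
  have h0 : rho ≠ 0 := isPrimitiveRoot_rho.ne_zero (by norm_num)
  have hsum : 1 + rho + rho ^ 2 = 0 := by
    simpa [Finset.sum_range_succ] using isPrimitiveRoot_rho.geom_sum_eq_zero (by norm_num)
  field_simp
  linear_combination -hsum

lemma E4_add_one (z : ℂ) : E4 (z + 1) = E4 z := by
  have hq : qq (z + 1) = qq z := by
    rw [qq, mul_add, mul_one, Complex.exp_add, Complex.exp_two_pi_mul_I, mul_one, qq]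
  rw [E4, hq, E4]

lemma E4_neg_inv {z : ℂ} (hz : 0 < z.im) : E4 (-z⁻¹) = z ^ 4 * E4 z := by
  have h0 : z ≠ 0 := fun h ↦ by simp [h] at hz
  have h := congrFun (slash_SL_eq E₄ ModularGroup.S) ⟨z, hz⟩
  rw [SlashInvariantForm.slash_S_apply, ← E4_coe, ← E4_coe] at h
  change E4 (-z)⁻¹ * z ^ (-(4 : ℕ) : ℤ) = E4 z at h
  rw [inv_neg, zpow_neg, zpow_natCast] at h
  rw [← h, mul_left_comm, mul_inv_cancel₀ (pow_ne_zero 4 h0), mul_one]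

lemma E4_rho : E4 rho = 0 := by
  have h : E4 rho = rho * E4 rho := calc
    E4 rho = E4 (-rho⁻¹) := by rw [neg_inv_rho, E4_add_one]
    _ = rho ^ 3 * rho * E4 rho := by rw [E4_neg_inv rho_im_pos, pow_succ]
    _ = rho * E4 rho := by rw [isPrimitiveRoot_rho.pow_eq_one, one_mul]
  exact by_contra fun h0 ↦ isPrimitiveRoot_rho.ne_one (by norm_num) (right_eq_mul₀ h0 |>.mp h)

lemma analyticAt_of_differentiableAt_im_pos {g : ℂ → ℂ}
    (hg : ∀ z : ℂ, 0 < z.im → DifferentiableAt ℂ g z) {z : ℂ} (hz : 0 < z.im) :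
    AnalyticAt ℂ g z :=
  DifferentiableOn.analyticAt (s := {z | 0 < z.im})
    (fun w hw ↦ (hg w hw).differentiableWithinAt) (isOpen_upperHalfPlaneSet.mem_nhds hz)

lemma analyticAt_E4 {z : ℂ} (hz : 0 < z.im) : AnalyticAt ℂ E4 z :=
  analyticAt_of_differentiableAt_im_pos (fun _ h ↦ (hasDerivAt_E4 h).differentiableAt) hz

lemma analyticAt_J {z : ℂ} (hz : 0 < z.im) : AnalyticAt ℂ J z :=
  analyticAt_of_differentiableAt_im_pos (fun _ h ↦ (hasDerivAt_J h).differentiableAt) hz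

lemma analyticAt_dedekindEta {z : ℂ} (hz : 0 < z.im) : AnalyticAt ℂ dedekindEta z :=
  analyticAt_of_differentiableAt_im_pos (fun _ h ↦
    dedekindEta_eq_eta ▸ differentiableAt_eta_of_mem_upperHalfPlaneSet h) hz

lemma E6_ne_zero_of_E4_eq_zero {z : ℂ} (hz : 0 < z.im) (h4 : E4 z = 0) : E6 z ≠ 0 := fun h6 ↦
  E4_cube_sub_E6_sq_ne_zero hz (by simp [h4, h6])

lemma deriv_E4_ne_zero {z : ℂ} (hz : 0 < z.im) (h4 : E4 z = 0) : deriv E4 z ≠ 0 := by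
  simpa [(hasDerivAt_E4 hz).deriv, h4] using E6_ne_zero_of_E4_eq_zero hz h4

lemma deriv_J_ne_zero {z : ℂ} (hz : 0 < z.im) (h0 : J z ≠ 0) (h1 : J z ≠ 1) : deriv J z ≠ 0 := by
  have hd := E4_cube_sub_E6_sq_ne_zero hz
  have h4 : E4 z ≠ 0 := (J_eq_zero_iff hz).not.mp h0
  have h6 : E6 z ≠ 0 := fun h6 ↦ sub_ne_zero.mpr h1 (by simp [J_sub_one hz, h6])
  rw [(hasDerivAt_J hz).deriv]
  simp [h4, h6, hd]

lemma eventually_E4_ne_zero {w : ℂ} (hw : 0 < w.im) : ∀ᶠ z in 𝓝[≠] w, E4 z ≠ 0 := by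
  by_cases h : E4 w = 0
  · exact (analyticAt_E4 hw).differentiableAt.hasDerivAt.eventually_ne (deriv_E4_ne_zero hw h)
  · exact nhdsWithin_le_nhds ((analyticAt_E4 hw).continuousAt.eventually_ne h)

lemma eventually_J_ne {w : ℂ} (hw : 0 < w.im) {c : ℂ} (h0 : c ≠ 0) (h1 : c ≠ 1) :
    ∀ᶠ z in 𝓝[≠] w, J z ≠ c := by
  by_cases h : J w = c
  · exact (analyticAt_J hw).differentiableAt.hasDerivAt.eventually_ne
      (deriv_J_ne_zero hw (h ▸ h0) (h ▸ h1))
  · exact nhdsWithin_le_nhds ((analyticAt_J hw).continuousAt.eventually_ne h)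

lemma hasDerivAt_J_of_E4_ne_zero {z : ℂ} (hz : 0 < z.im) (h4 : E4 z ≠ 0) :
    HasDerivAt J (-(2 * π * Complex.I) * (E6 z / E4 z * J z)) z := by
  have hdisc := E4_cube_sub_E6_sq_ne_zero hz
  convert! hasDerivAt_J hz using 1
  rw [J]
  field_simp

lemma E6_div_E4_sq_mul_J {z : ℂ} (hz : 0 < z.im) (h4 : E4 z ≠ 0) :
    (E6 z / E4 z) ^ 2 * J z = (J z - 1) * E4 z := by
  have hdisc := E4_cube_sub_E6_sq_ne_zero hz
  rw [J_sub_one hz, J]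
  field_simp

lemma hasDerivAt_E6_div_E4 {z : ℂ} (hz : 0 < z.im) (h4 : E4 z ≠ 0) :
    HasDerivAt (fun z ↦ E6 z / E4 z) (2 * π * Complex.I *
      (E2C z * (E6 z / E4 z) / 6 - E4 z / 2 + (E6 z / E4 z) ^ 2 / 3)) z := by
  convert! (hasDerivAt_E6 hz).fun_div (hasDerivAt_E4 hz) h4 using 1
  field_simp
  ring

lemma logDeriv_dedekindEta {z : ℂ} (hz : 0 < z.im) :
    logDeriv dedekindEta z = 2 * π * Complex.I * (E2C z / 24) := by
  have h := logDeriv_eta_eq_E2 ⟨z, hz⟩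
  rw [← E2C_coe, ← dedekindEta_eq_eta] at h
  linear_combination h

lemma logDeriv_E4 {z : ℂ} (hz : 0 < z.im) (h4 : E4 z ≠ 0) :
    logDeriv E4 z = 2 * π * Complex.I * ((E2C z - E6 z / E4 z) / 3) := by
  rw [logDeriv_apply, (hasDerivAt_E4 hz).deriv]
  field_simp

lemma logDeriv_J_sub_const {z : ℂ} (hz : 0 < z.im) (h4 : E4 z ≠ 0) (c : ℂ) :
    logDeriv (fun z ↦ J z - c) z = -(2 * π * Complex.I) * (E6 z / E4 z * J z) * (J z - c)⁻¹ := by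
  rw [logDeriv_apply, deriv_sub_const_fun, (hasDerivAt_J_of_E4_ne_zero hz h4).deriv,
    div_eq_mul_inv]

end DerivativesOnUpperHalfPlane

section StieltjesSystem

open Finset

variable {ι K : Type*} [Fintype ι] [DecidableEq ι] [Field K]

/-- Stieltjes' electrostatic equilibrium on a line: distinct unit charges at the `x i` are in
balance with one another and with charges proportional to `a` at `0` and `b` at `1`. -/
structure IsEquilibrium (a b c : K) (x : ι → K) : Prop where
  injective : Function.Injective x
  ne_zero : ∀ i, x i ≠ 0
  ne_one : ∀ i, x i ≠ 1
  balance : ∀ i, a / x i + b / (x i - 1) + ∑ j ∈ univ.erase i, c / (x i - x j) = 0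

lemma sum_sum_erase_comm {M : Type*} [AddCommMonoid M] (F : ι → ι → M) :
    ∑ i, ∑ j ∈ univ.erase i, F i j = ∑ i, ∑ j ∈ univ.erase i, F j i :=
  sum_comm' fun i j ↦ by simp [eq_comm]

lemma two_mul_sum_sum_erase {R : Type*} [NonAssocSemiring R] (F : ι → ι → R) :
    2 * ∑ i, ∑ j ∈ univ.erase i, F i j = ∑ i, ∑ j ∈ univ.erase i, (F i j + F j i) := by
  simp only [sum_add_distrib]
  rw [← sum_sum_erase_comm, two_mul]

lemma sum_sum_erase_mul {R : Type*} [CommRing R] (f : ι → R) :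
    ∑ i, ∑ j ∈ univ.erase i, f i * f j = (∑ i, f i) ^ 2 - ∑ i, f i ^ 2 := by
  simp only [sq, sum_mul_sum, ← sum_sub_distrib]
  exact sum_congr rfl fun i _ ↦ sum_erase_eq_sub (mem_univ i)

lemma sum_sum_erase_const {R : Type*} [Ring R] (r : R) :
    ∑ i : ι, ∑ _j ∈ univ.erase i, r = Fintype.card ι * (Fintype.card ι - 1) * r := by
  rcases isEmpty_or_nonempty ι with hι | hι
  · simp
  · simp [card_erase_of_mem, Nat.cast_pred Fintype.card_pos, mul_assoc]

/- The Heine–Stieltjes differential equation for `∏ i, (t - x i)`, as the Riccati equation of its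
logarithmic derivative. It is the sum of the equilibrium equations weighted by
`x i * (x i - 1) / (t - x i)`. -/
lemma IsEquilibrium.sum_inv_sub_identity {a b c : K} {x : ι → K} (hx : IsEquilibrium a b c x)
    {t : K} (ht : ∀ i, t ≠ x i) :
    c * (t * (t - 1)) * ((∑ i, (t - x i)⁻¹) ^ 2 - ∑ i, (t - x i)⁻¹ ^ 2) +
        2 * (a * (t - 1) + b * t) * ∑ i, (t - x i)⁻¹ =
      Fintype.card ι * (2 * (a + b) + c * (Fintype.card ι - 1)) := by
  have ht' (i : ι) : t - x i ≠ 0 := sub_ne_zero.mpr (ht i)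
  have hforce (i : ι) : x i * (x i - 1) / (t - x i) * ∑ j ∈ univ.erase i, c / (x i - x j) =
      (a + b) - (a * (t - 1) + b * t) * (t - x i)⁻¹ := by
    have := ht' i
    have := hx.ne_zero i
    have := sub_ne_zero.mpr (hx.ne_one i)
    rw [eq_neg_of_add_eq_zero_right (hx.balance i)]
    field_simp
    ring
  have hpair (i j : ι) (hj : j ∈ univ.erase i) :
      x i * (x i - 1) / (t - x i) * (c / (x i - x j)) +
          x j * (x j - 1) / (t - x j) * (c / (x j - x i)) =
        c * (t * (t - 1)) * ((t - x i)⁻¹ * (t - x j)⁻¹) - c := by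
    have := ht' i
    have := ht' j
    have := sub_ne_zero.mpr (hx.injective.ne (ne_of_mem_erase hj))
    rw [← neg_sub (x j) (x i)]
    field_simp
    ring
  have hsum : 2 * ∑ i, x i * (x i - 1) / (t - x i) * ∑ j ∈ univ.erase i, c / (x i - x j) =
      c * (t * (t - 1)) * ((∑ i, (t - x i)⁻¹) ^ 2 - ∑ i, (t - x i)⁻¹ ^ 2) -
        Fintype.card ι * (Fintype.card ι - 1) * c := by
    simp only [mul_sum _ _ (_ / _)]
    rw [two_mul_sum_sum_erase, sum_congr rfl fun i _ ↦ sum_congr rfl (hpair i),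
      ← sum_sum_erase_mul, ← sum_sum_erase_const]
    simp only [sum_sub_distrib, mul_sum]
  simp only [hforce, sum_sub_distrib, ← mul_sum, sum_const, card_univ, nsmul_eq_mul] at hsum
  linear_combination -hsum

lemma IsEquilibrium.map {L : Type*} [Field L] (φ : K →+* L) {a b c : K} {x : ι → K}
    (hx : IsEquilibrium a b c x) : IsEquilibrium (φ a) (φ b) (φ c) fun i ↦ φ (x i) where
  injective := φ.injective.comp hx.injective
  ne_zero i := (map_ne_zero φ).mpr (hx.ne_zero i)
  ne_one i := (map_ne_one_iff φ φ.injective).mpr (hx.ne_one i)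
  balance i := by simpa using congrArg φ (hx.balance i)

section Attractive

variable [LinearOrder K] [IsStrictOrderedRing K]

lemma div_add_div_sub_one_antitoneOn {a b : K} (ha : 0 ≤ a) (hb : 0 ≤ b) :
    AntitoneOn (fun u ↦ a / u + b / (u - 1)) (Set.Ioo 0 1) := fun u hu v hv huv ↦ by
  have hneg := div_le_div_of_nonneg_left hb (sub_pos.mpr hv.2) (sub_le_sub_left huv 1)
  have hflip (s : K) : b / (s - 1) = -(b / (1 - s)) := by rw [← neg_sub, div_neg]
  simp only [hflip]
  exact add_le_add (div_le_div_of_nonneg_left ha hu.1 huv) (neg_le_neg hneg)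

/- With attraction instead of repulsion, the leftmost and the rightmost of several points would be
pulled towards each other, while the outer field `a / u + b / (u - 1)` decreases in `u`. -/
lemma subsingleton_of_attractive_equilibrium {a b c : K} (ha : 0 ≤ a) (hb : 0 ≤ b) (hc : 0 < c)
    {x : ι → K} (hx : ∀ i, x i ∈ Set.Ioo 0 1) (hinj : Function.Injective x)
    (heq : ∀ i, a / x i + b / (x i - 1) + ∑ j ∈ univ.erase i, c / (x j - x i) = 0) :
    Subsingleton ι := by
  rw [← not_nontrivial_iff_subsingleton]
  intro hι
  have hne (i : ι) : (univ.erase i).Nonempty :=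
    let ⟨j, hj⟩ := exists_ne i
    ⟨j, mem_erase.mpr ⟨hj, mem_univ j⟩⟩
  obtain ⟨l, hl⟩ := Finite.exists_min x
  obtain ⟨r, hr⟩ := Finite.exists_max x
  have hpull_l : 0 < ∑ j ∈ univ.erase l, c / (x j - x l) :=
    sum_pos (fun j hj ↦ div_pos hc (sub_pos.mpr
      ((hl j).lt_of_ne (hinj.ne (ne_of_mem_erase hj).symm)))) (hne l)
  have hpull_r : ∑ j ∈ univ.erase r, c / (x j - x r) < 0 :=
    sum_neg (fun j hj ↦ div_neg_of_pos_of_neg hc (sub_neg.mpr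
      ((hr j).lt_of_ne (hinj.ne (ne_of_mem_erase hj))))) (hne r)
  have hfield := div_add_div_sub_one_antitoneOn ha hb (hx l) (hx r) (hl r)
  linarith [heq l, heq r]

lemma isEquilibrium_of_attractive_equilibrium {a b c : K} (ha : 0 ≤ a) (hb : 0 ≤ b) (hc : 0 < c)
    {x : ι → K} (hx : ∀ i, x i ∈ Set.Ioo 0 1) (hinj : Function.Injective x)
    (heq : ∀ i, a / x i + b / (x i - 1) + ∑ j ∈ univ.erase i, c / (x j - x i) = 0) :
    IsEquilibrium a b c x where
  injective := hinj
  ne_zero i := (hx i).1.ne'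
  ne_one i := (hx i).2.ne
  balance i := by
    have := subsingleton_of_attractive_equilibrium ha hb hc hx hinj heq
    have hempty : univ.erase i = ∅ :=
      eq_empty_of_forall_notMem fun j hj ↦ ne_of_mem_erase hj (Subsingleton.elim j i)
    simpa only [hempty, sum_empty] using heq i

end Attractive

end StieltjesSystem

section Residue

/-- The Schwarz derivative of a primitive of `f`. -/
def primitiveSchwarzian (f : ℂ → ℂ) (z : ℂ) : ℂ :=
  deriv (logDeriv f) z - 1 / 2 * logDeriv f z ^ 2

lemma analyticAt_logDeriv {f : ℂ → ℂ} {z : ℂ} (hf : AnalyticAt ℂ f z) (h0 : f z ≠ 0) :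
    AnalyticAt ℂ (logDeriv f) z :=
  hf.deriv.div hf h0

lemma logDeriv_div_sub_sq {φ : ℂ → ℂ} {z w : ℂ} (hφ : DifferentiableAt ℂ φ z) (h0 : φ z ≠ 0)
    (hzw : z ≠ w) : logDeriv (fun u ↦ φ u / (u - w) ^ 2) z = logDeriv φ z - 2 / (z - w) := by
  have hsub : DifferentiableAt ℂ (fun u ↦ u - w) z := by fun_prop
  rw [logDeriv_div (g := fun u ↦ (u - w) ^ 2) z h0 (pow_ne_zero 2 (sub_ne_zero.mpr hzw)) hφ
    (hsub.fun_pow 2), logDeriv_fun_pow hsub, logDeriv_apply (fun u ↦ u - w), deriv_sub_const_fun,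
    deriv_id'']
  ring

lemma primitiveSchwarzian_div_sub_sq {φ : ℂ → ℂ} {z w : ℂ} (hφ : AnalyticAt ℂ φ z) (h0 : φ z ≠ 0)
    (hzw : z ≠ w) :
    primitiveSchwarzian (fun u ↦ φ u / (u - w) ^ 2) z =
      primitiveSchwarzian φ z + 2 / (z - w) * logDeriv φ z := by
  have hsub : z - w ≠ 0 := sub_ne_zero.mpr hzw
  have hlog : logDeriv (fun u ↦ φ u / (u - w) ^ 2) =ᶠ[𝓝 z] fun u ↦ logDeriv φ u - 2 / (u - w) := by
    filter_upwards [hφ.eventually_analyticAt, hφ.continuousAt.eventually_ne h0,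
      isOpen_ne.mem_nhds hzw] with u hφu hu huw
    exact logDeriv_div_sub_sq hφu.differentiableAt hu huw
  have hderiv : HasDerivAt (fun u ↦ logDeriv φ u - 2 / (u - w))
      (deriv (logDeriv φ) z - -2 / (z - w) ^ 2) z := by
    have hpole := (hasDerivAt_const z (2 : ℂ)).fun_div ((hasDerivAt_id z).sub_const w) hsub
    simpa using (analyticAt_logDeriv hφ h0).differentiableAt.hasDerivAt.fun_sub hpole
  rw [primitiveSchwarzian, primitiveSchwarzian, hlog.deriv_eq, hderiv.deriv, hlog.eq_of_nhds]
  field_simp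
  ring

/- By `primitiveSchwarzian_div_sub_sq`, the pole of the Schwarz derivative at `w` disappears only if
`logDeriv φ` vanishes there. -/
lemma deriv_eq_zero_of_primitiveSchwarzian_div_sub_sq {φ S : ℂ → ℂ} {w : ℂ}
    (hφ : AnalyticAt ℂ φ w) (h0 : φ w ≠ 0) (hS : ContinuousAt S w)
    (hschw : ∀ᶠ z in 𝓝[≠] w, primitiveSchwarzian (fun u ↦ φ u / (u - w) ^ 2) z = S z) :
    deriv φ w = 0 := by
  have hlog := analyticAt_logDeriv hφ h0
  have heq : logDeriv φ =ᶠ[𝓝[≠] w] fun z ↦ (z - w) / 2 * (S z - primitiveSchwarzian φ z) := by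
    filter_upwards [hschw, self_mem_nhdsWithin, nhdsWithin_le_nhds hφ.eventually_analyticAt,
      nhdsWithin_le_nhds (hφ.continuousAt.eventually_ne h0)] with z hz hzw hφz h0z
    rw [← hz, primitiveSchwarzian_div_sub_sq hφz h0z hzw, add_sub_cancel_left]
    have : z - w ≠ 0 := sub_ne_zero.mpr hzw
    field_simp
  have hcont : ContinuousAt (fun z ↦ (z - w) / 2 * (S z - primitiveSchwarzian φ z)) w :=
    ((continuousAt_id.sub continuousAt_const).div_const 2).mul
      (hS.sub (hlog.deriv.continuousAt.sub (continuousAt_const.mul (hlog.continuousAt.pow 2))))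
  have hlogw : logDeriv φ w = 0 := by
    simpa using (hlog.continuousAt.eventuallyEq_nhds_iff_eventuallyEq_nhdsNE hcont).mp heq
      |>.eq_of_nhds
  simpa [logDeriv_apply, h0] using hlogw

lemma exists_analyticAt_div_sq_eq_div_sub_sq {F G : ℂ → ℂ} {w : ℂ} (hF : AnalyticAt ℂ F w)
    (hFw : F w ≠ 0) (hG : AnalyticAt ℂ G w) (hGw : G w = 0) (hG' : deriv G w ≠ 0) :
    ∃ φ : ℂ → ℂ, AnalyticAt ℂ φ w ∧ φ w ≠ 0 ∧ ∀ z, F z / G z ^ 2 = φ z / (z - w) ^ 2 := by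
  have hslope : AnalyticAt ℂ (dslope G w) w := by
    obtain ⟨p, hp⟩ := hG
    exact ⟨_, hp.has_fpower_series_dslope_fslope⟩
  have hslope0 : dslope G w w ^ 2 ≠ 0 := pow_ne_zero 2 (by rwa [dslope_same])
  refine ⟨fun z ↦ F z / dslope G w z ^ 2, hF.fun_div (hslope.fun_pow 2) hslope0,
    div_ne_zero hFw hslope0, fun z ↦ ?_⟩
  have hGz : (z - w) * dslope G w z = G z := by simpa [hGw] using sub_smul_dslope G w z
  rw [← hGz, mul_pow, div_div, mul_comm]

lemma tendsto_deriv_sub_sq_mul_of_primitiveSchwarzian {F G S : ℂ → ℂ} {w : ℂ}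
    (hF : AnalyticAt ℂ F w) (hFw : F w ≠ 0) (hG : AnalyticAt ℂ G w) (hGw : G w = 0)
    (hG' : deriv G w ≠ 0) (hS : ContinuousAt S w)
    (hschw : ∀ᶠ z in 𝓝[≠] w, primitiveSchwarzian (fun u ↦ F u / G u ^ 2) z = S z) :
    Tendsto (deriv fun z ↦ (z - w) ^ 2 * (F z / G z ^ 2)) (𝓝[≠] w) (𝓝 0) := by
  obtain ⟨φ, hφ, h0, hφ_eq⟩ := exists_analyticAt_div_sq_eq_div_sub_sq hF hFw hG hGw hG'
  simp only [hφ_eq] at hschw ⊢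
  have hlim : Tendsto (deriv φ) (𝓝[≠] w) (𝓝 0) := by
    rw [← deriv_eq_zero_of_primitiveSchwarzian_div_sub_sq hφ h0 hS hschw]
    exact hφ.deriv.continuousAt.tendsto.mono_left nhdsWithin_le_nhds
  refine hlim.congr' ?_
  filter_upwards [self_mem_nhdsWithin] with z hzw
  refine EventuallyEq.deriv_eq ?_
  filter_upwards [isOpen_ne.mem_nhds hzw] with u huw
  rw [mul_div_cancel₀ _ (pow_ne_zero 2 (sub_ne_zero.mpr huw))]

end Residue

section EtaQuotient

open UpperHalfPlane hiding I J
open scoped Real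

variable {ι : Type*} {x : ι → ℂ} {τ w : ℂ}

lemma prod_J_sub_sq_ne_zero {s : Finset ι} (hJ : ∀ i ∈ s, J τ ≠ x i) :
    ∏ i ∈ s, (J τ - x i) ^ 2 ≠ 0 :=
  Finset.prod_ne_zero_iff.mpr fun i hi ↦ pow_ne_zero 2 (sub_ne_zero.mpr (hJ i hi))

lemma analyticAt_prod_J_sub_sq (hτ : 0 < τ.im) (s : Finset ι) :
    AnalyticAt ℂ (fun z ↦ ∏ i ∈ s, (J z - x i) ^ 2) τ :=
  s.analyticAt_fun_prod fun _ _ ↦ ((analyticAt_J hτ).fun_sub analyticAt_const).fun_pow 2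

variable [Fintype ι]

/-- The function `η²⁰ / (E₄² ∏ᵢ (J - xᵢ)²)` of `f5`, for an arbitrary finite family of complex
parameters `xᵢ`. -/
def etaQuotient (x : ι → ℂ) (z : ℂ) : ℂ :=
  dedekindEta z ^ 20 / (E4 z ^ 2 * ∏ i, (J z - x i) ^ 2)

/-- The function `R` for which the logarithmic derivative of `etaQuotient x` is
`2πi (E₂ / 6 + (E₆ / E₄) R(J))`. -/
def logDerivCoeff (x : ι → ℂ) (t : ℂ) : ℂ := 2 / 3 + 2 * (t * ∑ i, (t - x i)⁻¹)

lemma etaQuotient_denom_ne_zero (h4 : E4 τ ≠ 0) (hJ : ∀ i, J τ ≠ x i) :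
    E4 τ ^ 2 * ∏ i, (J τ - x i) ^ 2 ≠ 0 :=
  mul_ne_zero (pow_ne_zero 2 h4) (prod_J_sub_sq_ne_zero fun i _ ↦ hJ i)

lemma analyticAt_etaQuotient (hτ : 0 < τ.im) (h4 : E4 τ ≠ 0) (hJ : ∀ i, J τ ≠ x i) :
    AnalyticAt ℂ (etaQuotient x) τ :=
  ((analyticAt_dedekindEta hτ).fun_pow 20).fun_div
    (((analyticAt_E4 hτ).fun_pow 2).fun_mul (analyticAt_prod_J_sub_sq hτ _))
    (etaQuotient_denom_ne_zero h4 hJ)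

lemma etaQuotient_ne_zero (hτ : 0 < τ.im) (h4 : E4 τ ≠ 0) (hJ : ∀ i, J τ ≠ x i) :
    etaQuotient x τ ≠ 0 :=
  div_ne_zero (pow_ne_zero 20 (dedekindEta_ne_zero hτ)) (etaQuotient_denom_ne_zero h4 hJ)

lemma logDeriv_prod_J_sub_sq (hτ : 0 < τ.im) (h4 : E4 τ ≠ 0) (hJ : ∀ i, J τ ≠ x i) :
    logDeriv (fun z ↦ ∏ i, (J z - x i) ^ 2) τ =
      -(2 * π * Complex.I) * (E6 τ / E4 τ * (2 * (J τ * ∑ i, (J τ - x i)⁻¹))) := by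
  have hd (i : ι) : DifferentiableAt ℂ (fun z ↦ J z - x i) τ :=
    (analyticAt_J hτ).differentiableAt.sub_const (x i)
  rw [logDeriv_prod (f := fun i z ↦ (J z - x i) ^ 2)
    (fun i _ ↦ pow_ne_zero 2 (sub_ne_zero.mpr (hJ i))) fun i _ ↦ (hd i).fun_pow 2]
  simp only [logDeriv_fun_pow (hd _), logDeriv_J_sub_const hτ h4, ← Finset.mul_sum]
  push_cast
  ring

lemma logDeriv_etaQuotient (hτ : 0 < τ.im) (h4 : E4 τ ≠ 0) (hJ : ∀ i, J τ ≠ x i) :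
    logDeriv (etaQuotient x) τ =
      2 * π * Complex.I * (E2C τ / 6 + E6 τ / E4 τ * logDerivCoeff x (J τ)) := by
  have hη := (analyticAt_dedekindEta hτ).differentiableAt
  have hE4 := (analyticAt_E4 hτ).differentiableAt
  have hprod := (analyticAt_prod_J_sub_sq hτ (x := x) Finset.univ).differentiableAt
  calc logDeriv (etaQuotient x) τ
      = 20 * logDeriv dedekindEta τ -
          (2 * logDeriv E4 τ + logDeriv (fun z ↦ ∏ i, (J z - x i) ^ 2) τ) := by
        have hdiv := logDeriv_div (f := fun z ↦ dedekindEta z ^ 20)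
          (g := fun z ↦ E4 z ^ 2 * ∏ i, (J z - x i) ^ 2) τ
          (pow_ne_zero 20 (dedekindEta_ne_zero hτ)) (etaQuotient_denom_ne_zero h4 hJ)
          (hη.fun_pow 20) ((hE4.fun_pow 2).fun_mul hprod)
        have hmul := logDeriv_mul (f := fun z ↦ E4 z ^ 2) τ (pow_ne_zero 2 h4)
          (prod_J_sub_sq_ne_zero fun i _ ↦ hJ i) (hE4.fun_pow 2) hprod
        rw [hmul, logDeriv_fun_pow hη, logDeriv_fun_pow hE4] at hdiv
        exact_mod_cast hdiv
    _ = 2 * π * Complex.I * (E2C τ / 6 + E6 τ / E4 τ * logDerivCoeff x (J τ)) := by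
        rw [logDeriv_dedekindEta hτ, logDeriv_E4 hτ h4, logDeriv_prod_J_sub_sq hτ h4 hJ,
          logDerivCoeff]
        ring

lemma hasDerivAt_logDerivCoeff {t : ℂ} (ht : ∀ i, t ≠ x i) :
    HasDerivAt (logDerivCoeff x) (2 * (∑ i, (t - x i)⁻¹ - t * ∑ i, (t - x i)⁻¹ ^ 2)) t := by
  have hinv (i : ι) : HasDerivAt (fun u ↦ (u - x i)⁻¹) (-(t - x i)⁻¹ ^ 2) t := by
    convert! ((hasDerivAt_id t).sub_const (x i)).fun_inv (sub_ne_zero.mpr (ht i)) using 1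
    rw [inv_pow, neg_div, one_div, id_eq]
  have hsum := HasDerivAt.fun_sum (u := Finset.univ) fun i _ ↦ hinv i
  convert! (((hasDerivAt_id t).fun_mul hsum).const_mul 2).const_add (2 / 3) using 1
  rw [Finset.sum_neg_distrib, id_eq]
  ring

variable [DecidableEq ι]

lemma logDerivCoeff_riccati (hx : IsEquilibrium 8 3 12 x) {t : ℂ} (ht : ∀ i, t ≠ x i) :
    (t - 1) * (logDerivCoeff x t / 3 - t * deriv (logDerivCoeff x) t - logDerivCoeff x t ^ 2 / 2) -
      t * logDerivCoeff x t / 2 = (1 - (12 * Fintype.card ι + 5) ^ 2) / 72 * t := by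
  rw [(hasDerivAt_logDerivCoeff ht).deriv, logDerivCoeff]
  linear_combination -(t / 6) * hx.sum_inv_sub_identity ht

lemma primitiveSchwarzian_eq_of_riccati {f R : ℂ → ℂ} {N : ℂ} (hτ : 0 < τ.im) (h4 : E4 τ ≠ 0)
    (hlog : logDeriv f =ᶠ[𝓝 τ]
      fun z ↦ 2 * π * Complex.I * (E2C z / 6 + E6 z / E4 z * R (J z)))
    (hR : DifferentiableAt ℂ R (J τ))
    (hriccati : (J τ - 1) * (R (J τ) / 3 - J τ * deriv R (J τ) - R (J τ) ^ 2 / 2) -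
      J τ * R (J τ) / 2 = (1 - N ^ 2) / 72 * J τ) :
    primitiveSchwarzian f τ = 2 * (π : ℂ) ^ 2 * (N / 6) ^ 2 * E4 τ := by
  have hJ0 : J τ ≠ 0 := (J_eq_zero_iff hτ).not.mpr h4
  have hRJ : HasDerivAt (fun z ↦ R (J z)) _ τ :=
    hR.hasDerivAt.comp τ (hasDerivAt_J_of_E4_ne_zero hτ h4)
  have hderiv := (((hasDerivAt_E2C hτ).div_const 6).fun_add
    ((hasDerivAt_E6_div_E4 hτ h4).fun_mul hRJ)).const_mul (2 * π * Complex.I)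
  rw [primitiveSchwarzian, hlog.deriv_eq, hderiv.deriv, hlog.eq_of_nhds]
  refine mul_left_cancel₀ hJ0 ?_
  linear_combination (2 * π * Complex.I) ^ 2 * (E4 τ * hriccati +
    (R (J τ) / 3 - J τ * deriv R (J τ) - R (J τ) ^ 2 / 2) * E6_div_E4_sq_mul_J hτ h4) -
    J τ * E4 τ * N ^ 2 * π ^ 2 / 18 * Complex.I_sq

lemma primitiveSchwarzian_etaQuotient (hx : IsEquilibrium 8 3 12 x) (hτ : 0 < τ.im)
    (h4 : E4 τ ≠ 0) (hJ : ∀ i, J τ ≠ x i) :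
    primitiveSchwarzian (etaQuotient x) τ =
      2 * (π : ℂ) ^ 2 * ((12 * Fintype.card ι + 5) / 6) ^ 2 * E4 τ := by
  refine primitiveSchwarzian_eq_of_riccati hτ h4 ?_ (hasDerivAt_logDerivCoeff hJ).differentiableAt
    (logDerivCoeff_riccati hx hJ)
  filter_upwards [isOpen_upperHalfPlaneSet.mem_nhds hτ,
    (analyticAt_E4 hτ).continuousAt.eventually_ne h4,
    eventually_all.mpr fun i ↦ (analyticAt_J hτ).continuousAt.eventually_ne (hJ i)]
    with z hz h4z hJz
  exact logDeriv_etaQuotient hz h4z hJz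

lemma eventually_primitiveSchwarzian_etaQuotient (hx : IsEquilibrium 8 3 12 x) (hw : 0 < w.im) :
    ∀ᶠ z in 𝓝[≠] w, primitiveSchwarzian (etaQuotient x) z =
      2 * (π : ℂ) ^ 2 * ((12 * Fintype.card ι + 5) / 6) ^ 2 * E4 z := by
  filter_upwards [nhdsWithin_le_nhds (isOpen_upperHalfPlaneSet.mem_nhds hw),
    eventually_E4_ne_zero hw,
    eventually_all.mpr fun i ↦ eventually_J_ne hw (hx.ne_zero i) (hx.ne_one i)] with z hz h4 hJ
  exact primitiveSchwarzian_etaQuotient hx hz h4 hJ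

lemma tendsto_deriv_sub_sq_mul_etaQuotient_of_eq_div (hx : IsEquilibrium 8 3 12 x) (hw : 0 < w.im)
    {F G : ℂ → ℂ} (hFG : etaQuotient x = fun z ↦ F z / G z ^ 2) (hF : AnalyticAt ℂ F w)
    (hFw : F w ≠ 0) (hG : AnalyticAt ℂ G w) (hGw : G w = 0) (hG' : deriv G w ≠ 0) :
    Tendsto (deriv fun z ↦ (z - w) ^ 2 * etaQuotient x z) (𝓝[≠] w) (𝓝 0) := by
  have hschw := eventually_primitiveSchwarzian_etaQuotient hx hw
  rw [hFG] at hschw ⊢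
  exact tendsto_deriv_sub_sq_mul_of_primitiveSchwarzian hF hFw hG hGw hG'
    (continuousAt_const.mul (analyticAt_E4 hw).continuousAt) hschw

lemma tendsto_deriv_sub_sq_mul_etaQuotient_of_E4_eq_zero (hx : IsEquilibrium 8 3 12 x)
    (hw : 0 < w.im) (h4 : E4 w = 0) :
    Tendsto (deriv fun z ↦ (z - w) ^ 2 * etaQuotient x z) (𝓝[≠] w) (𝓝 0) := by
  have hprod : ∏ i, (J w - x i) ^ 2 ≠ 0 := prod_J_sub_sq_ne_zero fun i _ ↦ by
    rw [(J_eq_zero_iff hw).mpr h4]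
    exact (hx.ne_zero i).symm
  refine tendsto_deriv_sub_sq_mul_etaQuotient_of_eq_div hx hw
    (F := fun z ↦ dedekindEta z ^ 20 / ∏ i, (J z - x i) ^ 2) ?_ ?_ ?_
    (analyticAt_E4 hw) h4 (deriv_E4_ne_zero hw h4)
  · ext z
    rw [etaQuotient, div_div, mul_comm (E4 z ^ 2)]
  · exact ((analyticAt_dedekindEta hw).fun_pow 20).fun_div (analyticAt_prod_J_sub_sq hw _) hprod
  · exact div_ne_zero (pow_ne_zero 20 (dedekindEta_ne_zero hw)) hprod

lemma tendsto_deriv_sub_sq_mul_etaQuotient_of_J_eq (hx : IsEquilibrium 8 3 12 x)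
    (hw : 0 < w.im) {i : ι} (hJ : J w = x i) :
    Tendsto (deriv fun z ↦ (z - w) ^ 2 * etaQuotient x z) (𝓝[≠] w) (𝓝 0) := by
  have h4 : E4 w ≠ 0 := (J_eq_zero_iff hw).not.mp (hJ ▸ hx.ne_zero i)
  have hden : E4 w ^ 2 * ∏ j ∈ Finset.univ.erase i, (J w - x j) ^ 2 ≠ 0 :=
    mul_ne_zero (pow_ne_zero 2 h4) (prod_J_sub_sq_ne_zero fun j hj ↦
      hJ ▸ hx.injective.ne (Finset.ne_of_mem_erase hj).symm)
  refine tendsto_deriv_sub_sq_mul_etaQuotient_of_eq_div hx hw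
    (F := fun z ↦ dedekindEta z ^ 20 / (E4 z ^ 2 * ∏ j ∈ Finset.univ.erase i, (J z - x j) ^ 2))
    (G := fun z ↦ J z - x i) ?_ ?_ ?_ ((analyticAt_J hw).fun_sub analyticAt_const)
    (sub_eq_zero.mpr hJ) ?_
  · ext z
    rw [etaQuotient, div_div, ← Finset.mul_prod_erase _ _ (Finset.mem_univ i)]
    ring
  · exact ((analyticAt_dedekindEta hw).fun_pow 20).fun_div
      (((analyticAt_E4 hw).fun_pow 2).fun_mul (analyticAt_prod_J_sub_sq hw _)) hden
  · exact div_ne_zero (pow_ne_zero 20 (dedekindEta_ne_zero hw)) hden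
  · rw [deriv_sub_const_fun]
    exact deriv_J_ne_zero hw (hJ ▸ hx.ne_zero i) (hJ ▸ hx.ne_one i)

end EtaQuotient

theorem solution_12n_plus_5_general {ι : Type*} [Fintype ι] [DecidableEq ι] {x : ι → ℂ}
    (hx : IsEquilibrium 8 3 12 x) :
    (∀ τ : ℂ, 0 < τ.im → E4 τ ≠ 0 → (∀ i, J τ ≠ x i) →
      DifferentiableAt ℂ (etaQuotient x) τ ∧ etaQuotient x τ ≠ 0) ∧
    (∀ w : ℂ, 0 < w.im → (E4 w = 0 ∨ ∃ i, J w = x i) →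
      Tendsto (deriv fun z ↦ (z - w) ^ 2 * etaQuotient x z) (𝓝[≠] w) (𝓝 0)) ∧
    (∀ τ : ℂ, 0 < τ.im → E4 τ ≠ 0 → (∀ i, J τ ≠ x i) →
      primitiveSchwarzian (etaQuotient x) τ =
        2 * (Real.pi : ℂ) ^ 2 * ((12 * Fintype.card ι + 5) / 6) ^ 2 * E4 τ) := by
  refine ⟨fun τ hτ h4 hJ ↦
    ⟨(analyticAt_etaQuotient hτ h4 hJ).differentiableAt, etaQuotient_ne_zero hτ h4 hJ⟩,
    fun w hw hpole ↦ ?_, fun τ hτ ↦ primitiveSchwarzian_etaQuotient hx hτ⟩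
  rcases hpole with h4 | ⟨i, hJ⟩
  · exact tendsto_deriv_sub_sq_mul_etaQuotient_of_E4_eq_zero hx hw h4
  · exact tendsto_deriv_sub_sq_mul_etaQuotient_of_J_eq hx hw hJ

/-- If the `xᵢ ∈ (0,1)` solve `E^n_{8,3,12}`, then `f = η²⁰/(E₄²∏(J−xᵢ)²)` is holomorphic and
nonvanishing away from the poles, has double poles with zero residues at `ρ` and each `wᵢ`, and
any primitive `h` of `f` satisfies `{h,τ} = 2π²((12n+5)/6)² E₄(τ)`. -/
theorem solution_12n_plus_5 (n : ℕ) (x : Fin n → ℝ) (w : Fin n → ℂ)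
    (hx : ∀ i, x i ∈ Set.Ioo (0 : ℝ) 1) (hinj : Function.Injective x)
    (hsys : ∀ i, 8 / x i + 3 / (x i - 1) +
      ∑ j ∈ Finset.univ.erase i, 12 / (x j - x i) = 0)
    (hw : ∀ i, 0 < (w i).im) (hJw : ∀ i, J (w i) = (x i : ℂ)) :
    (∀ τ : ℂ, 0 < τ.im → E4 τ ≠ 0 → (∀ i, J τ ≠ (x i : ℂ)) →
      DifferentiableAt ℂ (f5 n x) τ ∧ f5 n x τ ≠ 0) ∧
    (Tendsto
      (fun τ : ℂ => deriv (fun z : ℂ => (z - rho) ^ 2 * f5 n x z) τ)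
      (𝓝[≠] rho) (𝓝 0) ∧
     ∀ i, Tendsto
      (fun τ : ℂ => deriv (fun z : ℂ => (z - w i) ^ 2 * f5 n x z) τ)
      (𝓝[≠] w i) (𝓝 0)) ∧
    (∀ τ : ℂ, 0 < τ.im → E4 τ ≠ 0 → (∀ i, J τ ≠ (x i : ℂ)) →
      deriv (fun z : ℂ => deriv (f5 n x) z / f5 n x z) τ -
        1 / 2 * (deriv (f5 n x) τ / f5 n x τ) ^ 2 =
        2 * (Real.pi : ℂ) ^ 2 * ((12 * (n : ℂ) + 5) / 6) ^ 2 * E4 τ) := by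
  have hrep : IsEquilibrium (8 : ℂ) 3 12 fun i ↦ (x i : ℂ) := by
    simpa using (isEquilibrium_of_attractive_equilibrium (by norm_num) (by norm_num) (by norm_num)
      hx hinj hsys).map Complex.ofRealHom
  obtain ⟨hreg, hres, hschw⟩ := solution_12n_plus_5_general hrep
  rw [Fintype.card_fin] at hschw
  exact ⟨hreg, ⟨hres rho rho_im_pos (.inl E4_rho), fun i ↦ hres (w i) (hw i) (.inr ⟨i, hJw i⟩)⟩,
    hschw⟩
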